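/- arXiv:2407.04429 — 2 statements merged into one kernel-verified Lean document; each statement's English description precedes it below -/
import Mathlib

section
/- Let n ≥ 2, let σ and σ̃ be permutations of {1,…,n}, let ρ be the n-cycle with ρ(i) = i+1 for i < n and ρ(n) = 1, and suppose the pair (σ,σ̃) satisfies condition (C). Let a ∈ {1,…,n} satisfy σ(a) ≠ a, and let S := {σ^k(a) : k ≥ 0} be the support of the cycle of σ containing a. Then either σ̃(b) = σ(b) for every b ∈ S, or σ̃(b) = b for every b ∈ S. -/
/-- Condition (C) on a pair of permutations `(σ, σ')` relative to the `n`-cycle `ρ`: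
for every `i` with `σ' i ≠ i`, either `σ' i = σ i`, or both `σ i = i` and
`σ' i = ρ i`. -/
def CondC (n : ℕ) (ρ σ σ' : Equiv.Perm (Fin n)) : Prop :=
  ∀ i, σ' i ≠ i → (σ' i = σ i ∨ (σ i = i ∧ σ' i = ρ i))

/-!
A point that `σ` moves lies in a `σ`-orbit of moved points, and condition (C) says that `σ'` either
fixes such a point or agrees with `σ` there. If `σ'` agrees with `σ` at `x`, then `σ'` sends the
moved point `x` to `σ x`, so by injectivity it cannot also fix `σ x`; hence agreement passes from
`x` to `σ x`. Since the orbit is periodic, agreement at one of its points reaches all of them.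
-/

open Function

section PeriodicOrbit

variable {α : Type*} {f g : α → α} {x : α}

theorem isFixedPt_iterate_iff_of_mem_periodicPts (hx : x ∈ periodicPts f) (k : ℕ) :
    IsFixedPt f (f^[k] x) ↔ IsFixedPt f x := by
  rw [← minimalPeriod_eq_one_iff_isFixedPt, minimalPeriod_apply_iterate hx,
    minimalPeriod_eq_one_iff_isFixedPt]

theorem exists_iterate_iterate_eq_of_mem_periodicPts (hx : x ∈ periodicPts f) (k m : ℕ) :
    ∃ j, f^[j] (f^[k] x) = f^[m] x := by
  have hk : f^[k] x ∈ periodicPts f := (bijOn_periodicPts f).mapsTo.iterate k hx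
  rw [← mem_periodicOrbit_iff hk, periodicOrbit_apply_iterate_eq hx]
  exact iterate_mem_periodicOrbit hx m

theorem apply_iterate_eq_of_apply_eq (hg : Injective g)
    (h : ∀ k, g (f^[k] x) = f^[k] x ∨ g (f^[k] x) = f (f^[k] x)) (hx : g x = f x) (k : ℕ) :
    g (f^[k] x) = f (f^[k] x) := by
  induction k with
  | zero => exact hx
  | succ k ih =>
    rcases h (k + 1) with hfix | hagree
    · rw [iterate_succ_apply'] at hfix ⊢
      have hfixed : f (f^[k] x) = f^[k] x := hg (hfix.trans ih.symm)
      rw [hfix, hfixed, hfixed]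
    · exact hagree

theorem forall_apply_iterate_eq_or_forall_isFixedPt (hg : Injective g)
    (h : ∀ k, g (f^[k] x) = f^[k] x ∨ g (f^[k] x) = f (f^[k] x)) (hx : x ∈ periodicPts f) :
    (∀ k, g (f^[k] x) = f (f^[k] x)) ∨ ∀ k, IsFixedPt g (f^[k] x) := by
  refine or_iff_not_imp_right.2 fun hnot m ↦ ?_
  obtain ⟨k, hk⟩ := not_forall.1 hnot
  obtain ⟨j, hj⟩ := exists_iterate_iterate_eq_of_mem_periodicPts hx k m
  rw [← hj]
  refine apply_iterate_eq_of_apply_eq hg (fun i ↦ ?_) ((h k).resolve_left hk) j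
  simpa only [iterate_add_apply] using h (i + k)

end PeriodicOrbit

theorem lin_lem4_general {α : Type*} {σ σ' : α → α} (hσ' : Injective σ')
    (hC : ∀ i, σ' i ≠ i → σ' i = σ i ∨ σ i = i) {a : α} (hper : a ∈ periodicPts σ)
    (ha : σ a ≠ a) :
    (∀ k, σ' (σ^[k] a) = σ (σ^[k] a)) ∨ ∀ k, σ' (σ^[k] a) = σ^[k] a := by
  refine forall_apply_iterate_eq_or_forall_isFixedPt hσ' (fun k ↦ ?_) hper
  have hmoved : σ (σ^[k] a) ≠ σ^[k] a :=
    mt (isFixedPt_iterate_iff_of_mem_periodicPts hper k).1 ha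
  exact or_iff_not_imp_left.2 fun hne ↦ (hC _ hne).resolve_right hmoved

/-- If `σ a ≠ a` and `S = {σ^k(a) : k ≥ 0}` is the σ-orbit of `a`, then either `σ' = σ` on `S`, or `σ'` fixes every element of `S`. -/
theorem lin_lem4 (n : ℕ) (hn : 2 ≤ n) (ρ σ σ' : Equiv.Perm (Fin n))
    (hρ : ∀ i : Fin n, (ρ i).val = if i.val + 1 < n then i.val + 1 else 0)
    (hC : CondC n ρ σ σ')
    (a : Fin n) (ha : σ a ≠ a) :
    (∀ b : Fin n, (∃ k : ℕ, (σ ^ k) a = b) → σ' b = σ b) ∨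
      (∀ b : Fin n, (∃ k : ℕ, (σ ^ k) a = b) → σ' b = b) := by
  simpa only [forall_exists_index, forall_apply_eq_imp_iff, Equiv.Perm.iterate_eq_pow] using
    lin_lem4_general σ'.injective (fun i hi ↦ (hC i hi).imp_right And.left)
      (σ.injective.mem_periodicPts a) ha
end

section
/- Let n ≥ 2, let σ and σ̃ be permutations of {1,…,n}, let ρ be the n-cycle with ρ(i) = i+1 for i < n and ρ(n) = 1, and suppose σ(1) ≠ 1 and the pair (σ,σ̃) satisfies condition (C). Then σ̃ is obtained from σ by deleting whole nontrivial cycles; precisely: (a) for every b ∈ {1,…,n}, σ̃(b) = b or σ̃(b) = σ(b); (b) for every a with σ(a) ≠ a, letting S := {σ^k(a) : k ≥ 0} be the σ-orbit of a, either σ̃(b) = σ(b) for all b ∈ S, or σ̃(b) = b for all b ∈ S; and (c) if σ̃ ≠ σ, then there exists a with σ(a) ≠ a such that σ̃ fixes every element of the σ-orbit of a. -/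
/-!
Agreement of `σ'` with `σ` spreads along `σ`-cycles: if `σ' x = σ x` and `σ x` is not fixed by `σ`,
then `σ'` cannot fix `σ x = σ' x` by injectivity, so it agrees with `σ` there too.

If `σ'` moves `a` to `ρ a` although `σ` fixes `a`, then `σ` also fixes `ρ a` and `σ'` moves it to
`ρ (ρ a)`: otherwise `σ'` would agree with `σ` on a nontrivial `σ`-cycle through `ρ a`, and `ρ a`
would have two preimages `a` and `σ⁻¹ (ρ a)` under `σ'`. Hence `σ` would fix the whole `ρ`-cycle of
`a`, which is impossible when `σ` moves some point of each nontrivial `ρ`-cycle.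
-/

section

open Equiv.Perm

variable {α : Type*} [Finite α] {ρ σ σ' : Equiv.Perm α} {a b : α}

theorem mem_of_mapsTo_of_sameCycle {s : Set α} (hs : Set.MapsTo σ s s) (hab : σ.SameCycle a b)
    (ha : a ∈ s) : b ∈ s := by
  obtain ⟨k, rfl⟩ := hab.exists_nat_pow_eq
  exact hs.perm_pow k ha

theorem apply_eq_apply_of_sameCycle (h : ∀ x, σ x ≠ x → σ' x = x ∨ σ' x = σ x)
    (hab : σ.SameCycle a b) (ha : σ' a = σ a) : σ' b = σ b := by
  refine mem_of_mapsTo_of_sameCycle (s := {x | σ' x = σ x}) (fun x (hx : σ' x = σ x) ↦ ?_) hab ha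
  by_cases hfix : σ x = x
  · rwa [hfix]
  · have hmoved : σ (σ x) ≠ σ x := σ.injective.ne hfix
    refine (h (σ x) hmoved).resolve_left fun hfix' ↦ hfix ?_
    exact σ'.injective (hfix'.trans hx.symm)

theorem apply_eq_self_of_sameCycle (h : ∀ x, σ x ≠ x → σ' x = x ∨ σ' x = σ x)
    (hab : σ.SameCycle a b) (hmoved : σ a ≠ a) (ha : σ' a = a) : σ' b = b := by
  have hb : σ b ≠ b := mt hab.apply_eq_self_iff.2 hmoved
  refine (h b hb).resolve_right fun hagree ↦ hmoved ?_
  exact (apply_eq_apply_of_sameCycle h hab.symm hagree).symm.trans ha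

theorem mapsTo_setOf_fixed_and_apply_eq
    (hC : ∀ x, σ' x ≠ x → σ' x = σ x ∨ σ x = x ∧ σ' x = ρ x) :
    Set.MapsTo ρ {x | σ x = x ∧ σ' x = ρ x} {x | σ x = x ∧ σ' x = ρ x} := by
  rintro x ⟨hfix, hx⟩
  by_cases hρx : ρ x = x
  · rw [hρx]
    exact ⟨hfix, hx⟩
  have hmoved : σ' (ρ x) ≠ ρ x := fun h ↦ hρx (σ'.injective (h.trans hx.symm))
  refine (hC _ hmoved).resolve_left fun hagree ↦ hρx ?_
  have hfollow : ∀ y, σ y ≠ y → σ' y = y ∨ σ' y = σ y := fun y hy ↦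
    or_iff_not_imp_left.2 fun hy' ↦ (hC y hy').resolve_right fun h ↦ hy h.1
  have hpre : σ' (σ.symm (ρ x)) = ρ x := by
    simpa using apply_eq_apply_of_sameCycle hfollow
      (sameCycle_symm_apply_right.2 (SameCycle.refl σ (ρ x))) hagree
  have hpre_eq : σ.symm (ρ x) = x := σ'.injective (hpre.trans hx.symm)
  exact ((Equiv.symm_apply_eq σ).1 hpre_eq).trans hfix

theorem apply_eq_self_or_apply_eq_apply
    (hC : ∀ x, σ' x ≠ x → σ' x = σ x ∨ σ x = x ∧ σ' x = ρ x)
    (hρ : ∀ x, ρ x ≠ x → ∃ y, ρ.SameCycle x y ∧ σ y ≠ y) (a : α) :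
    σ' a = a ∨ σ' a = σ a := by
  refine or_iff_not_imp_left.2 fun hmoved ↦ (hC a hmoved).resolve_right fun ha ↦ ?_
  obtain ⟨b, hab, hb⟩ := hρ a (ha.2 ▸ hmoved)
  exact hb (mem_of_mapsTo_of_sameCycle (mapsTo_setOf_fixed_and_apply_eq hC) hab ha).1

theorem cycle_deletion_general
    (hC : ∀ x, σ' x ≠ x → σ' x = σ x ∨ σ x = x ∧ σ' x = ρ x)
    (hρ : ∀ x, ρ x ≠ x → ∃ y, ρ.SameCycle x y ∧ σ y ≠ y) :
    (∀ b, σ' b = b ∨ σ' b = σ b) ∧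
      (∀ a, σ a ≠ a →
        ((∀ b, (∃ k : ℕ, (σ ^ k) a = b) → σ' b = σ b) ∨
         (∀ b, (∃ k : ℕ, (σ ^ k) a = b) → σ' b = b))) ∧
      (σ' ≠ σ → ∃ a, σ a ≠ a ∧ ∀ b, (∃ k : ℕ, (σ ^ k) a = b) → σ' b = b) := by
  have hpart := apply_eq_self_or_apply_eq_apply hC hρ
  have hcycle {a b : α} : (∃ k : ℕ, (σ ^ k) a = b) → σ.SameCycle a b := fun ⟨k, hk⟩ ↦ ⟨k, hk⟩
  have hfixed {a : α} (hmoved : σ a ≠ a) (ha : σ' a = a) (b : α) (hb : ∃ k : ℕ, (σ ^ k) a = b) :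
      σ' b = b :=
    apply_eq_self_of_sameCycle (fun x _ ↦ hpart x) (hcycle hb) hmoved ha
  refine ⟨hpart, fun a hmoved ↦ ?_, fun hne ↦ ?_⟩
  · rcases hpart a with ha | ha
    · exact .inr (hfixed hmoved ha)
    · exact .inl fun b hb ↦ apply_eq_apply_of_sameCycle (fun x _ ↦ hpart x) (hcycle hb) ha
  · obtain ⟨a, ha⟩ := DFunLike.ne_iff.1 hne
    have ha' : σ' a = a := (hpart a).resolve_right ha
    have hmoved : σ a ≠ a := fun h ↦ ha (ha'.trans h.symm)
    exact ⟨a, hmoved, hfixed hmoved ha'⟩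

end

theorem eq_finRotate {n : ℕ} {ρ : Equiv.Perm (Fin n)}
    (hρ : ∀ i : Fin n, (ρ i).val = if i.val + 1 < n then i.val + 1 else 0) : ρ = finRotate n := by
  cases n with
  | zero => exact Subsingleton.elim _ _
  | succ n =>
    ext i
    rw [hρ, coe_finRotate]
    grind [Fin.ext_iff]

theorem finRotate_sameCycle {n : ℕ} (i j : Fin n) : (finRotate n).SameCycle i j := by
  rcases lt_or_ge n 2 with hn | hn
  · have : i = j := by omega
    exact this ▸ .refl _ _
  · have hmoved (k : Fin n) : finRotate n k ≠ k :=
      Equiv.Perm.mem_support.1 (support_finRotate_of_le hn ▸ Finset.mem_univ k)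
    exact (isCycle_finRotate_of_le hn).sameCycle (hmoved i) (hmoved j)

/-- `σ'` is obtained from `σ` by deleting whole nontrivial cycles: (a) `σ' b = b` or `σ' b = σ b` for all `b`; (b) on each σ-orbit of a non-fixed point, `σ'` agrees with `σ` or fixes every element; (c) if `σ' ≠ σ`, some nontrivial σ-orbit is fixed pointwise by `σ'`. -/
theorem cycle_deletion (n : ℕ) (hn : 2 ≤ n) (ρ σ σ' : Equiv.Perm (Fin n))
    (hρ : ∀ i : Fin n, (ρ i).val = if i.val + 1 < n then i.val + 1 else 0)
    (hC : CondC n ρ σ σ')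
    (hσ1 : σ ⟨0, by omega⟩ ≠ ⟨0, by omega⟩) :
    (∀ b : Fin n, σ' b = b ∨ σ' b = σ b) ∧
      (∀ a : Fin n, σ a ≠ a →
        ((∀ b : Fin n, (∃ k : ℕ, (σ ^ k) a = b) → σ' b = σ b) ∨
         (∀ b : Fin n, (∃ k : ℕ, (σ ^ k) a = b) → σ' b = b))) ∧
      (σ' ≠ σ → ∃ a : Fin n, σ a ≠ a ∧
        ∀ b : Fin n, (∃ k : ℕ, (σ ^ k) a = b) → σ' b = b) := by
  obtain rfl := eq_finRotate hρ
  exact cycle_deletion_general hC fun i _ ↦ ⟨_, finRotate_sameCycle i _, hσ1⟩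
end
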